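/- For every finite simple graph G on n ≥ 2 vertices that has no open twins and no isolated vertices, ⌈log₂ n⌉ ≤ γ^OD(G) ≤ n − 1, where γ^OD(G) is the minimum cardinality of an OD-code of G. -/

import Mathlib

/-!
Both bounds concern the `n` distinct open neighborhoods of an open twin-free graph.

For the lower bound, `u ↦ N(u) ∩ C` is injective into the subsets of an OD-code `C`, so
`n ≤ 2 ^ |C|`.

For the upper bound, Bondy's theorem (`exists_small_separating`) says that `n` distinct subsets of
a set have pairwise distinct traces on some set `S` of at most `n - 1` elements. Hence some vertex
`w` lies outside `S`, and the larger set `V \ {w}` is still open-separating. It is dominating as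
well, because `w` is not isolated and every other vertex dominates itself.
-/

/-- A set `C` is dominating: every closed neighborhood meets `C`. -/
def Dominating {V : Type*} (G : SimpleGraph V) (C : Set V) : Prop :=
  ∀ v : V, (insert v (G.neighborSet v) ∩ C).Nonempty

/-- A set `C` is total-dominating: every open neighborhood meets `C`. -/
def TotalDominating {V : Type*} (G : SimpleGraph V) (C : Set V) : Prop :=
  ∀ v : V, (G.neighborSet v ∩ C).Nonempty

/-- A set `C` is open-separating: open neighborhoods have pairwise distinct traces on `C`. -/
def OpenSeparating {V : Type*} (G : SimpleGraph V) (C : Set V) : Prop :=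
  ∀ u v : V, u ≠ v → G.neighborSet u ∩ C ≠ G.neighborSet v ∩ C

/-- A set `C` is locating: traces of open neighborhoods on `C` are distinct outside `C`. -/
def Locating {V : Type*} (G : SimpleGraph V) (C : Set V) : Prop :=
  ∀ u ∈ Cᶜ, ∀ v ∈ Cᶜ, u ≠ v → G.neighborSet u ∩ C ≠ G.neighborSet v ∩ C

/-- An OD-code: dominating and open-separating. -/
def IsODCode {V : Type*} (G : SimpleGraph V) (C : Set V) : Prop :=
  Dominating G C ∧ OpenSeparating G C

/-- An OTD-code: total-dominating and open-separating. -/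
def IsOTDCode {V : Type*} (G : SimpleGraph V) (C : Set V) : Prop :=
  TotalDominating G C ∧ OpenSeparating G C

/-- An LD-code: dominating and locating. -/
def IsLDCode {V : Type*} (G : SimpleGraph V) (C : Set V) : Prop :=
  Dominating G C ∧ Locating G C

/-- An LTD-code: total-dominating and locating. -/
def IsLTDCode {V : Type*} (G : SimpleGraph V) (C : Set V) : Prop :=
  TotalDominating G C ∧ Locating G C

/-- The OD-number: minimum cardinality of an OD-code. -/
noncomputable def gammaOD {V : Type*} (G : SimpleGraph V) : ℕ :=
  sInf {n | ∃ C : Set V, IsODCode G C ∧ C.ncard = n}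

/-- The OTD-number: minimum cardinality of an OTD-code. -/
noncomputable def gammaOTD {V : Type*} (G : SimpleGraph V) : ℕ :=
  sInf {n | ∃ C : Set V, IsOTDCode G C ∧ C.ncard = n}

/-- The LD-number: minimum cardinality of an LD-code. -/
noncomputable def gammaLD {V : Type*} (G : SimpleGraph V) : ℕ :=
  sInf {n | ∃ C : Set V, IsLDCode G C ∧ C.ncard = n}

/-- The LTD-number: minimum cardinality of an LTD-code. -/
noncomputable def gammaLTD {V : Type*} (G : SimpleGraph V) : ℕ :=
  sInf {n | ∃ C : Set V, IsLTDCode G C ∧ C.ncard = n}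

/-- `G` has open twins: two distinct vertices with equal open neighborhoods. -/
def HasOpenTwins {V : Type*} (G : SimpleGraph V) : Prop :=
  ∃ u v : V, u ≠ v ∧ G.neighborSet u = G.neighborSet v

/-- Bondy's theorem: finitely many distinct sets `f u`, `u ∈ T`, are separated by their traces on
some set of fewer than `|T|` points. Adding a new `a` to `T` costs at most one new point, since `a`
has the same trace as at most one of the members already separated. -/
theorem exists_small_separating {α β : Type*} (f : α → Set β) (hf : Function.Injective f)
    (T : Finset α) (hT : T.Nonempty) :
    ∃ S : Finset β, S.card < T.card ∧
      ∀ u ∈ T, ∀ v ∈ T, (∀ x ∈ S, x ∈ f u ↔ x ∈ f v) → u = v := by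
  classical
  induction hT using Finset.Nonempty.cons_induction with
  | singleton a => exact ⟨∅, by simp, by simp⟩
  | cons a T ha hT ih =>
    obtain ⟨S, hS, hsep⟩ := ih
    by_cases h : ∃ b ∈ T, ∀ x ∈ S, x ∈ f a ↔ x ∈ f b
    · obtain ⟨b, hb, hab⟩ := h
      have hne : f a ≠ f b := fun e => ha (hf e ▸ hb)
      obtain ⟨y, hy⟩ : ∃ y, ¬ (y ∈ f a ↔ y ∈ f b) := by
        by_contra! hc
        exact hne (Set.ext hc)
      refine ⟨insert y S, ?_, ?_⟩
      · have := Finset.card_insert_le y S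
        rw [Finset.card_cons]
        omega
      · -- a member of `T` with the trace of `a` must be `b`, which the point `y` rules out
        have key : ∀ v ∈ T, ¬ ∀ x ∈ insert y S, x ∈ f a ↔ x ∈ f v := by
          intro v hv hx
          have hbv : b = v := hsep b hb v hv fun x hxS =>
            (hab x hxS).symm.trans (hx x (Finset.mem_insert_of_mem hxS))
          subst hbv
          exact hy (hx y (Finset.mem_insert_self _ _))
        intro u hu v hv hx
        rcases Finset.mem_cons.1 hu with rfl | hu' <;> rcases Finset.mem_cons.1 hv with rfl | hv'
        · rfl
        · exact (key v hv' hx).elim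
        · exact (key u hu' fun x hxS => (hx x hxS).symm).elim
        · exact hsep u hu' v hv' fun x hxS => hx x (Finset.mem_insert_of_mem hxS)
    · refine ⟨S, by rw [Finset.card_cons]; omega, ?_⟩
      intro u hu v hv hx
      rcases Finset.mem_cons.1 hu with rfl | hu' <;> rcases Finset.mem_cons.1 hv with rfl | hv'
      · rfl
      · exact (h ⟨v, hv', hx⟩).elim
      · exact (h ⟨u, hu', fun x hxS => (hx x hxS).symm⟩).elim
      · exact hsep u hu' v hv' hx

theorem card_le_two_pow_of_openSeparating {V : Type*} [Fintype V] (G : SimpleGraph V)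
    {C : Set V} (hC : OpenSeparating G C) : Fintype.card V ≤ 2 ^ C.ncard := by
  rw [← Set.ncard_powerset C, ← Nat.card_eq_fintype_card, ← Set.ncard_univ]
  refine Set.ncard_le_ncard_of_injOn (fun u => G.neighborSet u ∩ C)
    (fun u _ => Set.inter_subset_right) (fun u _ v _ h => ?_) (Set.toFinite _)
  by_contra huv
  exact hC u v huv h

/-- In an open twin-free graph without isolated vertices, some vertex can be left out of the code
consisting of all vertices. -/
theorem exists_isODCode_compl_singleton {V : Type*} [Fintype V] [Nonempty V] (G : SimpleGraph V)
    (htwins : ¬ HasOpenTwins G) (hiso : ∀ v : V, (G.neighborSet v).Nonempty) :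
    ∃ w : V, IsODCode G {w}ᶜ := by
  have hinj : Function.Injective G.neighborSet := fun u v h => by
    by_contra huv
    exact htwins ⟨u, v, huv, h⟩
  obtain ⟨S, hS, hsep⟩ := exists_small_separating G.neighborSet hinj Finset.univ
    Finset.univ_nonempty
  obtain ⟨w, -, hw⟩ := Finset.exists_mem_notMem_of_card_lt_card hS
  refine ⟨w, fun v => ?_, fun u v huv h => huv ?_⟩
  · by_cases hv : v = w
    · obtain ⟨x, hx⟩ := hiso v
      exact ⟨x, Set.mem_insert_of_mem _ hx, fun hxw => G.ne_of_adj hx (hv.trans hxw.symm)⟩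
    · exact ⟨v, Set.mem_insert _ _, hv⟩
  · refine hsep u (Finset.mem_univ _) v (Finset.mem_univ _) fun x hx => ?_
    have hxw : x ∈ ({w}ᶜ : Set V) := fun e => hw (Set.mem_singleton_iff.1 e ▸ hx)
    have := Set.ext_iff.1 h x
    simpa only [Set.mem_inter_iff, hxw, and_true] using this

/-- For an open twin-free graph without isolated vertices on `n ≥ 2` vertices,
`⌈log₂ n⌉ ≤ γ^OD(G) ≤ n - 1`. -/
theorem gammaOD_bounds {V : Type*} [Fintype V] (G : SimpleGraph V)
    (hn : 2 ≤ Fintype.card V)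
    (htwins : ¬ HasOpenTwins G)
    (hiso : ∀ v : V, (G.neighborSet v).Nonempty) :
    Nat.clog 2 (Fintype.card V) ≤ gammaOD G ∧ gammaOD G ≤ Fintype.card V - 1 := by
  have : Nonempty V := Fintype.card_pos_iff.1 (by omega)
  obtain ⟨w, hw⟩ := exists_isODCode_compl_singleton G htwins hiso
  have hcard : ({w}ᶜ : Set V).ncard = Fintype.card V - 1 := by
    rw [Set.ncard_compl, Set.ncard_singleton, Nat.card_eq_fintype_card]
  have hmem : Fintype.card V - 1 ∈ {n | ∃ C : Set V, IsODCode G C ∧ C.ncard = n} :=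
    ⟨_, hw, hcard⟩
  refine ⟨?_, Nat.sInf_le hmem⟩
  -- an OD-code exists, so the infimum defining `gammaOD` is attained rather than a junk `0`
  obtain ⟨C, hC, hCn⟩ : ∃ C : Set V, IsODCode G C ∧ C.ncard = gammaOD G :=
    Nat.sInf_mem ⟨_, hmem⟩
  rw [← hCn]
  exact Nat.clog_le_of_le_pow (card_le_two_pow_of_openSeparating G hC.2)
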